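/- Let h > 0, Λ₀ > 0 and let μ, λ ∈ ℝ satisfy 0 < μ ≤ Λ₀, |λ| ≤ Λ₀ and 2μ + 3λ > 0. Define E = μ(2μ+3λ)/(μ+λ) and ν = λ/(2(μ+λ)). Then for every symmetric 2×2 real matrix A, (1/(Eh))·((1+ν)|A|² − ν(tr A)²) ≥ (1/(5hΛ₀))·|A|². (Strong convexity of the Airy compliance tensor 𝕃, with components L_{αβγδ} = ((1+ν)/(Eh))δ_{αγ}δ_{βδ} − (ν/(Eh))δ_{αβ}δ_{γδ}, in the form 𝕃A·A ≥ (1/(5hΛ₀))|A|².) -/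

import Mathlib

/-!
Split `|A|² = (|A|² - (tr A)²/2) + (tr A)²/2` into its deviatoric and spherical parts, both
nonnegative. The form `E⁻¹((1+ν)|A|² - ν(tr A)²)` is diagonal in this splitting, with eigenvalues
`1/(2μ)` and `(2μ+λ)/(2μ(2μ+3λ))`, so it suffices to bound each of them below by `1/(5Λ₀)`.
The first bound is immediate from `μ ≤ Λ₀`. The second is `2μ(2μ+3λ) ≤ 5Λ₀(2μ+λ)`: if `λ ≥ 0`, use
`2μ ≤ 2μ+λ` and `2μ+3λ ≤ 5Λ₀`; if `λ < 0`, use `2μ+3λ ≤ 2μ+λ` and `2μ ≤ 5Λ₀`.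
-/

/-- Lower bound for the spherical eigenvalue of the compliance tensor. -/
lemma spherical_bound {Λ₀ μ lam : ℝ} (hΛ₀ : 0 < Λ₀) (hμ₁ : 0 < μ) (hμ₂ : μ ≤ Λ₀)
    (hlam₁ : |lam| ≤ Λ₀) (hlam₂ : 0 < 2*μ + 3*lam) :
    1/(5*Λ₀) ≤ (2*μ+lam)/(2*μ*(2*μ+3*lam)) := by
  have hl := (abs_le.mp hlam₁).2
  rw [div_le_div_iff₀ (by positivity) (by positivity), one_mul]
  rcases le_total 0 lam with h0 | h0
  · exact mul_le_mul (by linarith) (by linarith) hlam₂.le (by linarith)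
  · rw [mul_comm (2*μ)]
    exact mul_le_mul (by linarith) (by linarith) (by linarith) (by linarith)

/-- Strong convexity of the Airy compliance tensor:
`𝕃A·A = (1/(Eh))((1+ν)|A|² − ν(tr A)²) ≥ (1/(5hΛ₀))|A|²`. -/
theorem stmt_3 (h Λ₀ μ lam E ν : ℝ) (hh : 0 < h) (hΛ₀ : 0 < Λ₀)
    (hμ₁ : 0 < μ) (hμ₂ : μ ≤ Λ₀) (hlam₁ : |lam| ≤ Λ₀) (hlam₂ : 0 < 2*μ + 3*lam)
    (hE : E = μ*(2*μ+3*lam)/(μ+lam)) (hν : ν = lam/(2*(μ+lam))) :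
    ∀ A : Matrix (Fin 2) (Fin 2) ℝ, A = A.transpose →
      (1/(E*h)) * ((1+ν) * (∑ i, ∑ j, (A i j)^2) - ν * (Matrix.trace A)^2)
        ≥ (1/(5*h*Λ₀)) * (∑ i, ∑ j, (A i j)^2) := by
  intro A _
  have hdev : 0 ≤ (∑ i, ∑ j, (A i j)^2) - (Matrix.trace A)^2/2 := by
    simp only [Fin.sum_univ_two, Matrix.trace_fin_two]
    nlinarith [sq_nonneg (A 0 0 - A 1 1), sq_nonneg (A 0 1), sq_nonneg (A 1 0)]
  have hsph : 0 ≤ (Matrix.trace A)^2/2 := by positivity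
  generalize (∑ i, ∑ j, (A i j)^2) = S at *
  generalize (Matrix.trace A)^2 = T at *
  have hml : 0 < μ + lam := by linarith
  have h1 : 1/(5*Λ₀) ≤ 1/(2*μ) := one_div_le_one_div_of_le (by positivity) (by linarith)
  have h2 := spherical_bound hΛ₀ hμ₁ hμ₂ hlam₁ hlam₂
  have key : (1/(E*h)) * ((1+ν) * S - ν * T)
      = (1/h) * (1/(2*μ) * (S - T/2) + (2*μ+lam)/(2*μ*(2*μ+3*lam)) * (T/2)) := by
    rw [hE, hν]
    obtain ⟨d, hd⟩ : ∃ d, d = 2*μ + 3*lam := ⟨_, rfl⟩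
    rw [← hd] at hlam₂ ⊢
    field_simp
    rw [hd]
    ring
  have key2 : (1/(5*h*Λ₀)) * S = (1/h) * (1/(5*Λ₀) * (S - T/2) + 1/(5*Λ₀) * (T/2)) := by
    field_simp
    ring
  rw [key, key2, ge_iff_le]
  gcongr
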